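/- Let n ≥ 1, let B = {x ∈ ℝⁿ : |x| < 1} be the open Euclidean unit ball and S = {x ∈ ℝⁿ : |x| = 1} its boundary sphere. Let f : closure(B) → ℝⁿ be continuous and let ε ∈ (0,1) be such that |f(x) − x| ≤ ε for all x ∈ S. Then (1−ε)·B ⊆ f(closure(B)), i.e., every y ∈ ℝⁿ with |y| < 1 − ε is of the form y = f(x) for some x in the closed unit ball. -/

import Mathlib

open MeasureTheory Metric Set Module
open scoped NNReal ENNReal

/-- Extrapolation to `1` from prescribed nodes `s`, exact on polynomials of degree `< #s`. -/
theorem Polynomial.exists_eval_one_eq_sum_mul_eval (s : Finset ℝ) :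
    ∃ c : ℝ → ℝ, ∀ P : Polynomial ℝ, P.degree < s.card →
      P.eval 1 = ∑ t ∈ s, c t * P.eval t := by
  refine ⟨fun t => (Lagrange.basis s id t).eval 1, fun P hP => ?_⟩
  have h := Lagrange.eq_interpolate (f := P) (v := id) (s := s) (injOn_id _) hP
  conv_lhs => rw [h]
  rw [Lagrange.interpolate_apply, Polynomial.eval_finsetSum]
  simp [mul_comm]

section

variable {E : Type*} [NormedAddCommGroup E] [NormedSpace ℝ E] [FiniteDimensional ℝ E]

/-- `det (1 + t A)` is a polynomial in `t` of degree at most the dimension. -/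
theorem ContinuousLinearMap.exists_polynomial_eval_eq_det_one_add_smul (A : E →L[ℝ] E) :
    ∃ P : Polynomial ℝ, P.natDegree ≤ finrank ℝ E ∧
      ∀ t : ℝ, P.eval t = (1 + t • A).det := by
  classical
  let b := finBasis ℝ E
  let M := LinearMap.toMatrix b b (A : E →ₗ[ℝ] E)
  refine ⟨((Polynomial.X : Polynomial ℝ) • M.map Polynomial.C +
    (1 : Matrix _ _ ℝ).map Polynomial.C).det, ?_, fun t => ?_⟩
  · simpa using Polynomial.natDegree_det_X_add_C_le M 1
  · rw [ContinuousLinearMap.det, ← LinearMap.det_toMatrix b, ← Polynomial.coe_evalRingHom,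
      RingHom.map_det]
    congr 1
    have h : LinearMap.toMatrix b b ((1 + t • A : E →L[ℝ] E) : E →ₗ[ℝ] E) = 1 + t • M := by
      simp [M, LinearMap.toMatrix_one]
    rw [h]
    ext i j
    rcases eq_or_ne i j with rfl | hij
    · simp
      ring
    · simp [hij]
      ring

/-- The determinant is positive near the identity. -/
theorem ContinuousLinearMap.exists_pos_forall_det_one_add_pos
    {E : Type*} [NormedAddCommGroup E] [NormedSpace ℝ E] :
    ∃ δ > 0, ∀ A : E →L[ℝ] E, ‖A‖ < δ → 0 < (1 + A).det := by
  have hc : Continuous fun A : E →L[ℝ] E => (1 + A).det :=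
    ContinuousLinearMap.continuous_det.comp (by fun_prop)
  have h0 : (0 : ℝ) < (1 + (0 : E →L[ℝ] E)).det := by
    simp [ContinuousLinearMap.det]
  obtain ⟨δ, hδ, h⟩ := Metric.eventually_nhds_iff.1
    (hc.continuousAt.eventually (lt_mem_nhds h0))
  exact ⟨δ, hδ, fun A hA => h (by simpa using hA)⟩

theorem LipschitzWith.bijective_id_add {g : E → E} {K : ℝ≥0} (hg : LipschitzWith K g)
    (hK : K < 1) : Function.Bijective fun x => x + g x := by
  have H : ApproximatesLinearOn (fun x => x + g x)
      ((ContinuousLinearEquiv.refl ℝ E : E ≃L[ℝ] E) : E →L[ℝ] E) univ K := by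
    rw [ApproximatesLinearOn.approximatesLinearOn_iff_lipschitzOnWith, lipschitzOnWith_univ]
    convert hg using 1
    ext x
    simp
  have hc : Subsingleton E ∨
      K < ‖((ContinuousLinearEquiv.refl ℝ E).symm : E →L[ℝ] E)‖₊⁻¹ := by
    rcases subsingleton_or_nontrivial E with h | h
    · exact Or.inl h
    · right
      have : ‖((ContinuousLinearEquiv.refl ℝ E).symm : E →L[ℝ] E)‖₊ = 1 := by
        ext
        exact ContinuousLinearMap.norm_id
      simpa [this] using hK
  exact ⟨injOn_univ.1 (H.injOn hc), H.surjective hc⟩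

theorem image_ball_id_add_eq {E : Type*} [NormedAddCommGroup E] {g : E → E} {R : ℝ} (hg : ∀ x, R ≤ ‖x‖ → g x = 0)
    (hb : Function.Bijective fun x => x + g x) :
    (fun x => x + g x) '' ball 0 R = ball 0 R := by
  have h : (fun x => x + g x) '' (ball 0 R)ᶜ = (ball 0 R)ᶜ := by
    refine (image_congr fun x hx => ?_).trans (image_id _)
    simp [hg x (by simpa using hx)]
  rw [← compl_inj_iff, ← image_compl_eq hb, h]

/-- A Lipschitz perturbation of the identity with small constant and supported in a ball
preserves the volume of that ball, computed through its Jacobian. -/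
theorem integral_det_one_add_fderiv_eq [MeasurableSpace E] [BorelSpace E]
    {g : E → E} {K : ℝ≥0} {R : ℝ}
    (hg : LipschitzWith K g) (hK : K < 1) (hgR : ∀ x, R ≤ ‖x‖ → g x = 0)
    (hdet : ∀ x, 0 < (1 + fderiv ℝ g x).det) :
    IntegrableOn (fun x => (1 + fderiv ℝ g x).det) (ball 0 R) μH[finrank ℝ E] ∧
      ∫ x in ball 0 R, (1 + fderiv ℝ g x).det ∂μH[finrank ℝ E] =
        (μH[finrank ℝ E] : Measure E).real (ball 0 R) := by
  set μ : Measure E := μH[finrank ℝ E] with hμ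
  let F : E → E := fun x => x + g x
  have hF : LipschitzWith (1 + K) F := LipschitzWith.id.add hg
  have hb := LipschitzWith.bijective_id_add hg hK
  let D : Set E := {x | DifferentiableAt ℝ g x}
  have hD : MeasurableSet D := measurableSet_of_differentiableAt ℝ g
  have hD0 : μ Dᶜ = 0 := hg.ae_differentiableAt
  have hs : (ball 0 R ∩ D : Set E) =ᵐ[μ] ball 0 R :=
    inter_ae_eq_left_of_ae_eq_univ (ae_eq_univ.2 hD0)
  have hnull : μ (F '' Dᶜ) = 0 := by
    have := hF.hausdorffMeasure_image_le (d := finrank ℝ E) (Nat.cast_nonneg _) Dᶜ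
    rw [← hμ, hD0, mul_zero] at this
    exact le_antisymm this bot_le
  have himage : μ (F '' (ball 0 R ∩ D)) = μ (ball 0 R) := by
    refine le_antisymm ?_ ?_
    · exact (measure_mono (image_mono inter_subset_left)).trans_eq
        (congrArg μ (image_ball_id_add_eq hgR hb))
    · calc μ (ball 0 R) = μ (F '' ball 0 R) :=
            congrArg μ (image_ball_id_add_eq hgR hb).symm
        _ ≤ μ (F '' (ball 0 R ∩ D) ∪ F '' Dᶜ) := by
            refine measure_mono ?_
            rw [← image_union]
            refine image_mono fun x hx => ?_
            by_cases hxD : x ∈ D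
            · exact Or.inl ⟨hx, hxD⟩
            · exact Or.inr hxD
        _ ≤ μ (F '' (ball 0 R ∩ D)) + μ (F '' Dᶜ) := measure_union_le _ _
        _ = μ (F '' (ball 0 R ∩ D)) := by rw [hnull, add_zero]
  have hlint : ∫⁻ x in ball 0 R, ENNReal.ofReal (1 + fderiv ℝ g x).det ∂μ = μ (ball 0 R) := by
    rw [← himage, ← lintegral_abs_det_fderiv_eq_addHaar_image μ (measurableSet_ball.inter hD)
      (f := F) (f' := fun x => 1 + fderiv ℝ g x)
      (fun x hx => ((hasFDerivAt_id x).add hx.2.hasFDerivAt).hasFDerivWithinAt)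
      hb.injective.injOn, setLIntegral_congr hs]
    exact lintegral_congr fun x => by rw [abs_of_pos (hdet x)]
  have hmeas : Measurable fun x => (1 + fderiv ℝ g x).det :=
    ContinuousLinearMap.continuous_det.measurable.comp
      ((measurable_fderiv ℝ g).const_add 1)
  have hnn : ∀ x, 0 ≤ (1 + fderiv ℝ g x).det := fun x => (hdet x).le
  refine ⟨⟨hmeas.aestronglyMeasurable, ?_⟩, ?_⟩
  · rw [hasFiniteIntegral_iff_ofReal (ae_of_all _ hnn), hlint]
    exact measure_ball_lt_top
  · rw [integral_eq_lintegral_of_nonneg_ae (ae_of_all _ hnn) hmeas.aestronglyMeasurable, hlint]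
    rfl

/-- For a Lipschitz map `g` vanishing outside a ball, the Jacobian determinant of `x ↦ x + g x`
cannot vanish almost everywhere on the ball. -/
theorem not_ae_det_one_add_fderiv_eq_zero [MeasurableSpace E] [BorelSpace E]
    {g : E → E} {K : ℝ≥0} {R : ℝ} (hR : 0 < R)
    (hg : LipschitzWith K g) (hgR : ∀ x, R ≤ ‖x‖ → g x = 0) :
    ¬ ∀ᵐ x ∂(μH[finrank ℝ E] : Measure E), x ∈ ball (0 : E) R →
      (1 + fderiv ℝ g x).det = 0 := by
  intro hzero
  set μ : Measure E := μH[finrank ℝ E]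
  obtain ⟨δ, hδ, hdet⟩ := ContinuousLinearMap.exists_pos_forall_det_one_add_pos (E := E)
  obtain ⟨τ, hτ, hτK⟩ : ∃ τ > 0, τ * (K : ℝ) < min δ 1 := by
    refine ⟨min δ 1 / (K + 1), by positivity, ?_⟩
    rw [div_mul_eq_mul_div, div_lt_iff₀ (by positivity)]
    have : 0 < min δ 1 := by positivity
    nlinarith
  obtain ⟨s, hsub, hcard⟩ := (Set.Ioo_infinite hτ).exists_subset_card_eq (finrank ℝ E + 1)
  obtain ⟨c, hc⟩ := Polynomial.exists_eval_one_eq_sum_mul_eval s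
  have hc_one : ∑ t ∈ s, c t = 1 := by
    have := hc 1 (by rw [Polynomial.degree_one, hcard]; exact_mod_cast Nat.succ_pos _)
    simpa using this.symm
  have hc_det (A : E →L[ℝ] E) : (1 + A).det = ∑ t ∈ s, c t * (1 + t • A).det := by
    obtain ⟨P, hP, hPt⟩ := A.exists_polynomial_eval_eq_det_one_add_smul
    have := hc P (by
      rw [hcard]
      exact Polynomial.degree_le_natDegree.trans_lt (by exact_mod_cast Nat.lt_succ_of_le hP))
    simpa [hPt] using this
  have hsmall (t : ℝ) (ht : t ∈ s) :
      IntegrableOn (fun x => (1 + t • fderiv ℝ g x).det) (ball 0 R) μ ∧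
        ∫ x in ball 0 R, (1 + t • fderiv ℝ g x).det ∂μ = μ.real (ball 0 R) := by
    obtain ⟨ht0, htτ⟩ := hsub ht
    have hlip : LipschitzWith (‖t‖₊ * K) (fun x => t • g x) := (lipschitzWith_smul t).comp hg
    have hle : ((‖t‖₊ * K : ℝ≥0) : ℝ) ≤ τ * K := by
      push_cast
      rw [Real.norm_of_nonneg ht0.le]
      gcongr
    have hfd (x : E) : fderiv ℝ (fun x => t • g x) x = t • fderiv ℝ g x :=
      congrFun (fderiv_const_smul_field t (f := g)) x
    have := integral_det_one_add_fderiv_eq (g := fun x => t • g x) (R := R) hlip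
      (by
        rw [← NNReal.coe_lt_coe]
        exact hle.trans_lt (hτK.trans_le (min_le_right _ _)))
      (fun x hx => by simp [hgR x hx])
      (fun x => hdet _ ((norm_fderiv_le_of_lipschitz ℝ hlip).trans_lt
        (hle.trans_lt (hτK.trans_le (min_le_left _ _)))))
    simpa only [hfd] using this
  have h0 : ∫ x in ball 0 R, (1 + fderiv ℝ g x).det ∂μ = 0 := by
    rw [← integral_zero E ℝ (μ := μ.restrict (ball 0 R))]
    exact integral_congr_ae ((ae_restrict_iff' measurableSet_ball).2 hzero)
  have h1 : ∫ x in ball 0 R, (1 + fderiv ℝ g x).det ∂μ = μ.real (ball 0 R) := by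
    rw [integral_congr_ae (ae_of_all _ fun x => hc_det (fderiv ℝ g x)),
      integral_finsetSum _ fun t ht => (hsmall t ht).1.const_mul (c t)]
    simp_rw [integral_const_mul]
    rw [Finset.sum_congr rfl fun t ht => by rw [(hsmall t ht).2], ← Finset.sum_mul, hc_one,
      one_mul]
  have hpos : 0 < μ.real (ball (0 : E) R) :=
    ENNReal.toReal_pos (measure_ball_pos μ 0 hR).ne' measure_ball_lt_top.ne
  linarith

end

section

variable {E : Type*} [NormedAddCommGroup E] [NormedSpace ℝ E]

/-- The radial retraction onto the closed ball of radius `c`. -/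
noncomputable def radialRetraction (c : ℝ) (x : E) : E := (c / max c ‖x‖) • x

theorem radialRetraction_of_le {c : ℝ} (hc : 0 < c) {x : E} (hx : ‖x‖ ≤ c) :
    radialRetraction c x = x := by
  simp [radialRetraction, max_eq_left hx, hc.ne']

theorem radialRetraction_of_ge {c : ℝ} {x : E} (hx : c ≤ ‖x‖) :
    radialRetraction c x = (c / ‖x‖) • x := by
  simp [radialRetraction, max_eq_right hx]

theorem norm_radialRetraction_of_ge {c : ℝ} (hc : 0 < c) {x : E} (hx : c ≤ ‖x‖) :
    ‖radialRetraction c x‖ = c := by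
  have : 0 < ‖x‖ := hc.trans_le hx
  rw [radialRetraction_of_ge hx, norm_smul, Real.norm_of_nonneg (by positivity)]
  field_simp

theorem norm_radialRetraction_le {c : ℝ} (hc : 0 < c) (x : E) : ‖radialRetraction c x‖ ≤ c := by
  rcases le_total ‖x‖ c with h | h
  · rwa [radialRetraction_of_le hc h]
  · exact (norm_radialRetraction_of_ge hc h).le

theorem lipschitzWith_radialRetraction {c : ℝ} (hc : 0 < c) :
    LipschitzWith 2 (radialRetraction c : E → E) := by
  refine LipschitzWith.of_dist_le_mul fun v w => ?_
  rw [dist_eq_norm, dist_eq_norm]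
  have hv : 0 < max c ‖v‖ := lt_max_of_lt_left hc
  have hw : 0 < max c ‖w‖ := lt_max_of_lt_left hc
  have h : radialRetraction c v - radialRetraction c w =
      (c / max c ‖v‖) • (v - w) + (c / max c ‖v‖ - c / max c ‖w‖) • w := by
    simp only [radialRetraction]
    module
  have h1 : c / max c ‖v‖ ≤ 1 := (div_le_one hv).2 (le_max_left _ _)
  have h2 : |max c ‖w‖ - max c ‖v‖| ≤ ‖v - w‖ := by
    calc |max c ‖w‖ - max c ‖v‖| ≤ |‖w‖ - ‖v‖| := by
          simpa using abs_max_sub_max_le_max c ‖w‖ c ‖v‖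
      _ ≤ ‖w - v‖ := abs_norm_sub_norm_le w v
      _ = ‖v - w‖ := norm_sub_rev w v
  have h3 : c / max c ‖v‖ - c / max c ‖w‖ =
      c / max c ‖v‖ * ((max c ‖w‖ - max c ‖v‖) / max c ‖w‖) := by
    field_simp
  have h4 : ‖(c / max c ‖v‖ - c / max c ‖w‖) • w‖ ≤ ‖v - w‖ := by
    rw [norm_smul, Real.norm_eq_abs, h3, abs_mul, abs_div (max c ‖w‖ - _), abs_of_pos hw,
      abs_of_pos (div_pos hc hv)]
    calc c / max c ‖v‖ * (|max c ‖w‖ - max c ‖v‖| / max c ‖w‖) * ‖w‖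
        ≤ 1 * (‖v - w‖ / max c ‖w‖) * max c ‖w‖ := by
          gcongr
          exact le_max_right _ _
      _ = ‖v - w‖ := by field_simp
  have h5 : ‖(c / max c ‖v‖) • (v - w)‖ ≤ ‖v - w‖ := by
    rw [norm_smul, Real.norm_of_nonneg (by positivity)]
    exact mul_le_of_le_one_left (norm_nonneg _) h1
  rw [h]
  refine (norm_add_le _ _).trans ?_
  push_cast
  linarith

end

section

variable {E : Type*} [NormedAddCommGroup E] [InnerProductSpace ℝ E] [FiniteDimensional ℝ E]

/-- The differential of a map into a sphere is singular. -/
theorem HasFDerivAt.det_eq_zero_of_norm_eventuallyEq {F : E → E} {F' : E →L[ℝ] E} {x : E} {R : ℝ}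
    (hF : HasFDerivAt F F' x) (hR : 0 < R) (h : ∀ᶠ z in nhds x, ‖F z‖ = R) : F'.det = 0 := by
  by_contra hdet
  have hsurj : Function.Surjective (F' : E →ₗ[ℝ] E) :=
    (LinearEquiv.ofIsUnitDet (f := (F' : E →ₗ[ℝ] E)) (v := finBasis ℝ E) (v' := finBasis ℝ E)
      (by
        rw [LinearMap.det_toMatrix]
        exact isUnit_iff_ne_zero.2 hdet)).surjective
  obtain ⟨v, hv⟩ := hsurj (F x)
  have h1 := hF.norm_sq
  have h2 : HasFDerivAt (fun z => ‖F z‖ ^ 2) (0 : E →L[ℝ] ℝ) x :=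
    (hasFDerivAt_const (R ^ 2) x).congr_of_eventuallyEq (h.mono fun z hz => by simp [hz])
  have h3 := congrArg (fun L : E →L[ℝ] ℝ => L v) (h1.unique h2)
  have hv' : F' v = F x := hv
  have h4 : ‖F x‖ = R := h.self_of_nhds
  simp [hv', h4, hR.ne'] at h3

/-- A Lipschitz map equal to the identity outside a ball has a zero. -/
theorem LipschitzWith.exists_eq_zero_of_eq_id_outside_ball {G : E → E} {K : ℝ≥0} {R : ℝ}
    (hR : 0 < R) (hG : LipschitzWith K G) (hGR : ∀ x, R ≤ ‖x‖ → G x = x) : ∃ x, G x = 0 := by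
  by_contra! hne
  borelize E
  obtain ⟨c, hc, hcR, hcG⟩ : ∃ c > 0, c ≤ R ∧ ∀ x, c ≤ ‖G x‖ := by
    obtain ⟨x₀, -, hx₀⟩ := (isCompact_closedBall (0 : E) R).exists_isMinOn
      (nonempty_closedBall.2 hR.le) hG.continuous.norm.continuousOn
    refine ⟨min R ‖G x₀‖, lt_min hR (norm_pos_iff.2 (hne _)), min_le_left _ _, fun x => ?_⟩
    rcases le_total R ‖x‖ with h | h
    · rw [hGR x h]
      exact (min_le_left _ _).trans h
    · exact (min_le_right _ _).trans (hx₀ (by simpa using h))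
  let g : E → E := fun x => (R / c) • radialRetraction c (G x) - radialRetraction R x
  have hg : LipschitzWith (‖R / c‖₊ * (2 * K) + 2) g :=
    ((lipschitzWith_smul (R / c)).comp ((lipschitzWith_radialRetraction hc).comp hG)).sub
      (lipschitzWith_radialRetraction hR)
  have hgR (x : E) (hx : R ≤ ‖x‖) : g x = 0 := by
    simp only [g]
    rw [hGR x hx, radialRetraction_of_ge (hcR.trans hx), radialRetraction_of_ge hx, smul_smul,
      div_mul_div_cancel₀ hc.ne', sub_self]
  have hsphere (x : E) (hx : x ∈ ball (0 : E) R) : ‖x + g x‖ = R := by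
    simp only [g]
    rw [radialRetraction_of_le hR (by simpa using (mem_ball_zero_iff.1 hx).le),
      add_sub_cancel, norm_smul, norm_radialRetraction_of_ge hc (hcG x),
      Real.norm_of_nonneg (by positivity), div_mul_cancel₀ _ hc.ne']
  refine not_ae_det_one_add_fderiv_eq_zero hR hg hgR ?_
  filter_upwards [hg.ae_differentiableAt] with x hx hxR
  exact ((hasFDerivAt_id x).add hx.hasFDerivAt).det_eq_zero_of_norm_eventuallyEq hR
    (Filter.mem_of_superset (isOpen_ball.mem_nhds hxR) hsphere)

/-- A continuous vector field on a closed ball pointing outwards on the boundary has a zero. -/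
theorem exists_eq_zero_of_inner_pos {φ : E → E}
    (hφ : ContinuousOn φ (closedBall 0 1)) {m : ℝ} (hm : 0 < m)
    (hin : ∀ x, ‖x‖ = 1 → m ≤ inner ℝ (φ x) x) : ∃ x, ‖x‖ ≤ 1 ∧ φ x = 0 := by
  by_contra! hne
  have hcont : Continuous fun x => φ (radialRetraction 1 x) :=
    hφ.comp_continuous (lipschitzWith_radialRetraction one_pos).continuous
      fun x => by simpa using norm_radialRetraction_le one_pos x
  obtain ⟨δ, hδ, hδm, hδφ⟩ : ∃ δ > 0, δ ≤ m ∧ ∀ x, ‖x‖ ≤ 1 → δ ≤ ‖φ x‖ := by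
    obtain ⟨x₀, hx₀, hmin⟩ := (isCompact_closedBall (0 : E) 1).exists_isMinOn
      (nonempty_closedBall.2 zero_le_one) hφ.norm
    refine ⟨min m ‖φ x₀‖, lt_min hm (norm_pos_iff.2 (hne _ (by simpa using hx₀))),
      min_le_left _ _, fun x hx => ?_⟩
    exact (min_le_right _ _).trans (hmin (by simpa using hx))
  obtain ⟨ψ, hψ, hψφ, -⟩ := hcont.exists_contDiff_approx 1 (ε := fun _ => δ)
    continuous_const fun _ => hδ
  let b : ContDiffBump (0 : E) := ⟨1, 2, one_pos, one_lt_two⟩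
  obtain ⟨K, hK⟩ : ∃ K, LipschitzWith K fun x => b x • (ψ x - x) :=
    ContDiff.lipschitzWith_of_hasCompactSupport (𝕂 := ℝ) (n := 1)
      b.hasCompactSupport.smul_right (b.contDiff.smul (hψ.sub contDiff_id)) one_ne_zero
  obtain ⟨x, hx⟩ := (LipschitzWith.id.add hK).exists_eq_zero_of_eq_id_outside_ball two_pos
    fun x hx => by simp [b.zero_of_le_dist (by simpa using hx)]
  simp only [id_eq] at hx
  have hd := hψφ x
  rw [dist_eq_norm] at hd
  rcases le_or_gt ‖x‖ 1 with h | h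
  · rw [b.one_of_mem_closedBall (by simpa using h), one_smul, add_sub_cancel] at hx
    rw [hx, radialRetraction_of_le one_pos h, zero_sub, norm_neg] at hd
    exact (hδφ x h).not_gt hd
  · have hx0 : 0 < ‖x‖ := one_pos.trans h
    have h1 : m * ‖x‖ ≤ inner ℝ (φ (radialRetraction 1 x)) x := by
      have := hin _ (norm_radialRetraction_of_ge one_pos h.le)
      conv_rhs at this => rw [radialRetraction_of_ge h.le, real_inner_smul_right]
      rw [radialRetraction_of_ge h.le]
      rwa [one_div_mul_eq_div, le_div_iff₀ hx0] at this
    have h2 : -(‖ψ x - φ (radialRetraction 1 x)‖ * ‖x‖) ≤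
        inner ℝ (ψ x - φ (radialRetraction 1 x)) x := by
      have := abs_real_inner_le_norm (ψ x - φ (radialRetraction 1 x)) x
      exact (abs_le.1 this).1
    rw [inner_sub_left] at h2
    have h3 : 0 < inner ℝ (ψ x) x := by nlinarith
    have h4 := congrArg (fun z => inner ℝ z x) hx
    simp only [inner_add_left, real_inner_smul_left, inner_sub_left, inner_zero_left,
      real_inner_self_eq_norm_sq] at h4
    have hb0 : 0 ≤ b x := b.nonneg
    have hb1 : b x ≤ 1 := b.le_one
    have h5 : 0 < ‖x‖ ^ 2 := by positivity
    rcases hb0.eq_or_lt with hb | hb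
    · rw [← hb] at h4
      linarith
    · nlinarith [mul_pos hb h3, mul_nonneg (sub_nonneg.2 hb1) h5.le]

end

/-- **Topological surjectivity lemma.**
If `f` is continuous on the closed unit ball of `ℝⁿ` and moves points of the unit
sphere by at most `ε < 1`, then the image of the closed unit ball under `f`
contains the open ball of radius `1 - ε`. -/
theorem ball_subset_image_of_close_to_id_on_sphere
    (n : ℕ) (hn : 1 ≤ n)
    (f : EuclideanSpace ℝ (Fin n) → EuclideanSpace ℝ (Fin n))
    (hf : ContinuousOn f (Metric.closedBall 0 1))
    (ε : ℝ) (hε0 : 0 < ε) (hε1 : ε < 1)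
    (hsphere : ∀ x : EuclideanSpace ℝ (Fin n), ‖x‖ = 1 → ‖f x - x‖ ≤ ε) :
    ∀ y : EuclideanSpace ℝ (Fin n), ‖y‖ < 1 - ε →
      ∃ x : EuclideanSpace ℝ (Fin n), ‖x‖ ≤ 1 ∧ f x = y := by
  intro y hy
  obtain ⟨x, hx, hxy⟩ := exists_eq_zero_of_inner_pos (φ := fun x => f x - y)
    (hf.sub continuousOn_const) (m := 1 - ε - ‖y‖) (by linarith) fun x hx => by
      have h1 := (abs_le.1 (abs_real_inner_le_norm (f x - x) x)).1
      have h2 := real_inner_le_norm y x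
      rw [hx, mul_one] at h1 h2
      have h3 : inner ℝ (f x - y) x =
          inner ℝ (f x - x) x + inner ℝ x x - inner ℝ y x := by
        simp only [inner_sub_left]
        ring
      rw [h3, real_inner_self_eq_norm_sq, hx]
      linarith [hsphere x hx]
  exact ⟨x, hx, sub_eq_zero.1 hxy⟩
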